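/- arXiv:0711.2164 — 3 statements merged into one kernel-verified Lean document; each statement's English description precedes it below -/
import Mathlib

section
/- (Potter bounds) Let φ : [1,∞) → (0,∞) be a function of the class 𝓜. Then for every ε > 0 there exists a constant C ≥ 1 such that for all t ≥ 1 and all λ ≥ 1 one has C⁻¹ λ^{-ε} ≤ φ(λt)/φ(t) ≤ C λ^{ε}. -/
/-!
Write `h x = log (φ (exp x))`. Slow variation of `φ` says that `h (x + u) - h x → 0` as `x → ∞`
for each fixed `u`, and for measurable `h` this convergence is automatically uniform for `u` in a
bounded interval (Karamata's uniform convergence theorem): pointwise convergence implies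
convergence in measure, so for large `x` one finds a point `x + u + z`, `z ∈ [0, 1]`, at which `h`
is close both to `h x` and to `h (x + u)`. Hence `h` changes by at most `ε` over every interval of
length at most `1` far enough to the right, and by at most `ε * (s + 1)` over one of length `s`.
The remaining initial segment contributes only a bounded error, and exponentiating gives the
Potter bounds.
-/

open MeasureTheory Filter Topology

/-- The class `𝓜` of Borel measurable functions `φ : [1,∞) → (0,∞)` such that `φ` and `1/φ`
are bounded on every interval `[1,b]`, `1 < b < ∞`, and `φ` is slowly varying at `+∞`
in Karamata's sense. (We model `φ` as a function on all of `ℝ`; only its values on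
`[1,∞)` matter.) -/
def SlowlyVaryingM (φ : ℝ → ℝ) : Prop :=
  Measurable φ ∧
  (∀ t : ℝ, 1 ≤ t → 0 < φ t) ∧
  (∀ b : ℝ, 1 < b → ∃ C : ℝ, 0 < C ∧ ∀ t ∈ Set.Icc (1:ℝ) b, φ t ≤ C ∧ 1 / φ t ≤ C) ∧
  (∀ lam : ℝ, 0 < lam → Tendsto (fun t : ℝ => φ (lam * t) / φ t) atTop (𝓝 1))

open Set Bornology

theorem tendstoInMeasure_of_tendsto_ae_of_isCountablyGenerated {α ι E : Type*}
    {_ : MeasurableSpace α} {μ : Measure α} [IsFiniteMeasure μ] [PseudoEMetricSpace E]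
    {l : Filter ι} [l.IsCountablyGenerated] {f : ι → α → E} {g : α → E}
    (hf : ∀ i, AEStronglyMeasurable (f i) μ)
    (hfg : ∀ᵐ a ∂μ, Tendsto (fun i => f i a) l (𝓝 (g a))) :
    TendstoInMeasure μ f l g := by
  intro δ hδ
  refine tendsto_of_seq_tendsto fun i hi => ?_
  exact tendstoInMeasure_of_tendsto_ae (fun n => hf (i n)) (hfg.mono fun a ha => ha.comp hi) δ hδ

section AdditivelySlowlyVarying

variable {E : Type*} [PseudoMetricSpace E] {h : ℝ → E}

/-- Slow variation in additive notation, for functions with values in a metric space: a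
positive `φ` is slowly varying in Karamata's sense when `h = log ∘ φ ∘ exp` has this property. -/
def AdditivelySlowlyVarying (h : ℝ → E) : Prop :=
  ∀ u : ℝ, Tendsto (fun x => dist (h (x + u)) (h x)) atTop (𝓝 0)

theorem AdditivelySlowlyVarying.tendstoInMeasure_dist (hh : AdditivelySlowlyVarying h)
    (hm : AEStronglyMeasurable h) (a b : ℝ) :
    TendstoInMeasure (volume.restrict (Icc a b)) (fun x y => dist (h (x + y)) (h x)) atTop 0 := by
  refine tendstoInMeasure_of_tendsto_ae_of_isCountablyGenerated (fun x => ?_) (ae_of_all _ hh)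
  have hshift : AEStronglyMeasurable (fun y => h (x + y)) :=
    hm.comp_measurePreserving (measurePreserving_add_left volume x)
  exact (hshift.dist aestronglyMeasurable_const).restrict

theorem AdditivelySlowlyVarying.eventually_volume_lt (hh : AdditivelySlowlyVarying h)
    (hm : AEStronglyMeasurable h) (a b : ℝ) {δ : ℝ} (hδ : 0 < δ) {η : ENNReal} (hη : 0 < η) :
    ∀ᶠ x in atTop, volume ({y | δ ≤ dist (h (x + y)) (h x)} ∩ Icc a b) < η := by
  have hlim := tendstoInMeasure_iff_norm.1 (hh.tendstoInMeasure_dist hm a b) δ hδ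
  filter_upwards [hlim.eventually_lt_const hη] with x hx
  simpa [Measure.restrict_apply' measurableSet_Icc] using hx

theorem dist_add_lt_of_volume_lt {a b u x δ : ℝ} (hu : u ∈ Icc a b)
    (hx : volume ({y | δ / 2 ≤ dist (h (x + y)) (h x)} ∩ Icc a (b + 1)) < 2⁻¹)
    (hxu : volume ({y | δ / 2 ≤ dist (h (x + u + y)) (h (x + u))} ∩ Icc 0 1) < 2⁻¹) :
    dist (h (x + u)) (h x) < δ := by
  set A := {y | δ / 2 ≤ dist (h (x + y)) (h x)} ∩ Icc a (b + 1)
  set B := {y | δ / 2 ≤ dist (h (x + u + y)) (h (x + u))} ∩ Icc 0 1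
  have hlt : volume ((u + ·) ⁻¹' A ∪ B) < volume (Icc (0 : ℝ) 1) := calc
    volume ((u + ·) ⁻¹' A ∪ B) ≤ volume ((u + ·) ⁻¹' A) + volume B := measure_union_le _ _
    _ = volume A + volume B := by rw [measure_preimage_add]
    _ < 2⁻¹ + 2⁻¹ := ENNReal.add_lt_add hx hxu
    _ = volume (Icc (0 : ℝ) 1) := by simp [ENNReal.inv_two_add_inv_two]
  obtain ⟨z, hz, hzAB⟩ := not_subset.1 fun hsub => (measure_mono hsub).not_gt hlt
  have hzA : dist (h (x + u + z)) (h x) < δ / 2 := by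
    by_contra! hfar
    rw [add_assoc] at hfar
    exact hzAB (.inl ⟨hfar, by linarith [hu.1, hz.1], by linarith [hu.2, hz.2]⟩)
  have hzB : dist (h (x + u + z)) (h (x + u)) < δ / 2 := by
    by_contra! hfar
    exact hzAB (.inr ⟨hfar, hz⟩)
  linarith [dist_triangle_left (h (x + u)) (h x) (h (x + u + z))]

theorem AdditivelySlowlyVarying.tendstoUniformlyOn_dist (hh : AdditivelySlowlyVarying h)
    (hm : AEStronglyMeasurable h) (a b : ℝ) :
    TendstoUniformlyOn (fun x u => dist (h (x + u)) (h x)) 0 atTop (Icc a b) := by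
  refine Metric.tendstoUniformlyOn_iff.2 fun δ hδ => ?_
  have hnear := hh.eventually_volume_lt hm a (b + 1) (half_pos hδ) (η := 2⁻¹) (by simp)
  obtain ⟨X, hX⟩ := eventually_atTop.1 <|
    hh.eventually_volume_lt hm 0 1 (half_pos hδ) (η := 2⁻¹) (by simp)
  filter_upwards [hnear, eventually_ge_atTop (X - a)] with x hx hXx u hu
  simpa using dist_add_lt_of_volume_lt hu hx (hX (x + u) (by linarith [hu.1]))

theorem dist_add_le_mul_add_one {X x s ε : ℝ}
    (hstep : ∀ y ≥ X, ∀ u ∈ Icc (0 : ℝ) 1, dist (h (y + u)) (h y) ≤ ε)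
    (hx : X ≤ x) (hs : 0 ≤ s) : dist (h (x + s)) (h x) ≤ ε * (s + 1) := by
  have hε : 0 ≤ ε := dist_nonneg.trans (hstep x hx 0 (by simp))
  have hmin (k : ℕ) :
      dist (h (x + min (k : ℝ) s)) (h (x + min ((k + 1 : ℕ) : ℝ) s)) ≤ ε := by
    have hk : 0 ≤ min (k : ℝ) s := le_min k.cast_nonneg hs
    have hu : min ((k + 1 : ℕ) : ℝ) s - min (k : ℝ) s ∈ Icc (0 : ℝ) 1 := by
      push_cast
      constructor <;> grind
    simpa [dist_comm, add_assoc] using hstep (x + min (k : ℝ) s) (by linarith) _ hu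
  calc dist (h (x + s)) (h x)
      = dist (h (x + min ((0 : ℕ) : ℝ) s)) (h (x + min (⌈s⌉₊ : ℝ) s)) := by
        simp [hs, Nat.le_ceil, dist_comm]
    _ ≤ ∑ _k ∈ Finset.range ⌈s⌉₊, ε :=
        dist_le_range_sum_of_dist_le (f := fun k : ℕ => h (x + min (k : ℝ) s)) _ fun _ => hmin _
    _ = ε * ⌈s⌉₊ := by simp [mul_comm]
    _ ≤ ε * (s + 1) := mul_le_mul_of_nonneg_left (Nat.ceil_lt_add_one hs).le hε

theorem dist_max_le_diam_image_Icc {a X x : ℝ} (hbd : IsBounded (h '' Icc a X)) (hx : a ≤ x) :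
    dist (h (max x X)) (h x) ≤ Metric.diam (h '' Icc a X) := by
  rcases le_total x X with hxX | hXx
  · rw [max_eq_right hxX]
    exact Metric.dist_le_diam_of_mem hbd (mem_image_of_mem h ⟨hx.trans hxX, le_rfl⟩)
      (mem_image_of_mem h ⟨hx, hxX⟩)
  · simp [max_eq_left hXx, Metric.diam_nonneg]

theorem AdditivelySlowlyVarying.exists_dist_add_le (hh : AdditivelySlowlyVarying h)
    (hm : AEStronglyMeasurable h) {a : ℝ} (hbd : ∀ b, IsBounded (h '' Icc a b))
    {ε : ℝ} (hε : 0 < ε) :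
    ∃ M, 0 ≤ M ∧ ∀ x, a ≤ x → ∀ s, 0 ≤ s → dist (h (x + s)) (h x) ≤ M + ε * s := by
  have hunif := Metric.tendstoUniformlyOn_iff.1 (hh.tendstoUniformlyOn_dist hm 0 1) ε hε
  obtain ⟨X, hX⟩ := eventually_atTop.1 hunif
  have hstep : ∀ y ≥ X, ∀ u ∈ Icc (0 : ℝ) 1, dist (h (y + u)) (h y) ≤ ε :=
    fun y hy u hu => by simpa using (hX y hy u hu).le
  refine ⟨2 * Metric.diam (h '' Icc a X) + ε, by positivity, fun x hx s hs => ?_⟩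
  have hstart := dist_max_le_diam_image_Icc (hbd X) hx
  have hend := dist_max_le_diam_image_Icc (hbd X) (x := x + s) (by linarith)
  rw [dist_comm] at hend
  have htail : dist (h (max (x + s) X)) (h (max x X)) ≤ ε * (s + 1) := calc
    dist (h (max (x + s) X)) (h (max x X))
        = dist (h (max x X + (max (x + s) X - max x X))) (h (max x X)) := by
          rw [add_sub_cancel]
    _ ≤ ε * (max (x + s) X - max x X + 1) :=
        dist_add_le_mul_add_one hstep (le_max_right _ _) (by grind)
    _ ≤ ε * (s + 1) := mul_le_mul_of_nonneg_left (by grind) hε.le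
  linarith [dist_triangle4 (h (x + s)) (h (max (x + s) X)) (h (max x X)) (h x)]

end AdditivelySlowlyVarying

theorem tendsto_dist_log_of_tendsto_div {α : Type*} {l : Filter α} {f g : α → ℝ}
    (hfg : Tendsto (fun a => f a / g a) l (𝓝 1)) :
    Tendsto (fun a => dist (Real.log (f a)) (Real.log (g a))) l (𝓝 0) := by
  have hlog : Tendsto (fun a => |Real.log (f a / g a)|) l (𝓝 0) := by
    simpa using (hfg.log one_ne_zero).abs
  refine hlog.congr' ?_
  filter_upwards [hfg.eventually_ne one_ne_zero] with a ha
  obtain ⟨hf, hg⟩ := div_ne_zero_iff.1 ha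
  rw [Real.log_div hf hg, Real.dist_eq]

theorem additivelySlowlyVarying_log_comp_exp {φ : ℝ → ℝ}
    (hφ : ∀ lam : ℝ, 0 < lam → Tendsto (fun t => φ (lam * t) / φ t) atTop (𝓝 1)) :
    AdditivelySlowlyVarying fun x => Real.log (φ (Real.exp x)) := by
  intro u
  refine tendsto_dist_log_of_tendsto_div ?_
  simpa [Function.comp_def, Real.exp_add, mul_comm] using
    (hφ (Real.exp u) (Real.exp_pos u)).comp Real.tendsto_exp_atTop

theorem abs_log_le_log_of_le_of_one_div_le {y C : ℝ} (hy : 0 < y) (hyC : y ≤ C)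
    (hyC' : 1 / y ≤ C) : |Real.log y| ≤ Real.log C := by
  have hinv : -Real.log y ≤ Real.log C := by
    simpa using Real.log_le_log (by positivity) hyC'
  exact abs_le'.2 ⟨Real.log_le_log hy hyC, hinv⟩

theorem SlowlyVaryingM.isBounded_log_comp_exp_image {φ : ℝ → ℝ} (hφ : SlowlyVaryingM φ) (b : ℝ) :
    IsBounded ((fun x => Real.log (φ (Real.exp x))) '' Icc 0 b) := by
  obtain ⟨-, hpos, hbd, -⟩ := hφ
  obtain ⟨C, -, hC⟩ := hbd (Real.exp b + 1) (by linarith [Real.exp_pos b])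
  refine isBounded_iff_forall_norm_le.2 ⟨Real.log C, forall_mem_image.2 fun x hx => ?_⟩
  have hexp : 1 ≤ Real.exp x := Real.one_le_exp hx.1
  obtain ⟨hle, hinv⟩ := hC (Real.exp x) ⟨hexp, by linarith [Real.exp_le_exp.2 hx.2]⟩
  exact abs_log_le_log_of_le_of_one_div_le (hpos _ hexp) hle hinv

theorem abs_log_le_add_mul_log_iff {q lam M ε : ℝ} (hq : 0 < q) (hlam : 0 < lam) :
    |Real.log q| ≤ M + ε * Real.log lam ↔
      (Real.exp M)⁻¹ * lam ^ (-ε) ≤ q ∧ q ≤ Real.exp M * lam ^ ε := by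
  have hupper : Real.exp M * lam ^ ε = Real.exp (M + ε * Real.log lam) := by
    rw [Real.rpow_def_of_pos hlam, Real.exp_add, mul_comm ε]
  have hlower : (Real.exp M)⁻¹ * lam ^ (-ε) = Real.exp (-(M + ε * Real.log lam)) := by
    rw [Real.rpow_neg hlam.le, ← mul_inv, hupper, Real.exp_neg]
  rw [hupper, hlower, ← Real.le_log_iff_exp_le hq, ← Real.log_le_iff_le_exp hq, abs_le]

/-- Potter bounds for a slowly varying function of class `𝓜`. -/
theorem slowly_varying_potter_bounds
    (φ : ℝ → ℝ) (hφ : SlowlyVaryingM φ) (ε : ℝ) (hε : 0 < ε) :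
    ∃ C : ℝ, 1 ≤ C ∧ ∀ t : ℝ, 1 ≤ t → ∀ lam : ℝ, 1 ≤ lam →
      C⁻¹ * lam ^ (-ε) ≤ φ (lam * t) / φ t ∧ φ (lam * t) / φ t ≤ C * lam ^ ε := by
  have ⟨hm, hpos, _, hsv⟩ := hφ
  have hmeas : Measurable fun x => Real.log (φ (Real.exp x)) := by fun_prop
  obtain ⟨M, hM0, hM⟩ := (additivelySlowlyVarying_log_comp_exp hsv).exists_dist_add_le
    hmeas.aestronglyMeasurable hφ.isBounded_log_comp_exp_image hε
  refine ⟨Real.exp M, Real.one_le_exp hM0, fun t ht lam hlam => ?_⟩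
  have ht0 : 0 < t := one_pos.trans_le ht
  have hlam0 : 0 < lam := one_pos.trans_le hlam
  have hφt : 0 < φ t := hpos t ht
  have hφlam : 0 < φ (lam * t) := hpos _ (one_le_mul_of_one_le_of_one_le hlam ht)
  rw [← abs_log_le_add_mul_log_iff (div_pos hφlam hφt) hlam0,
    Real.log_div hφlam.ne' hφt.ne', ← Real.dist_eq]
  simpa [Real.exp_add, Real.exp_log ht0, Real.exp_log hlam0, mul_comm] using
    hM (Real.log t) (Real.log_nonneg ht) (Real.log lam) (Real.log_nonneg hlam)
end

section
/- Let φ be a function of the class 𝓜 satisfying the Hörmander condition ∫₁^{+∞} dt/(t φ(t)²) < ∞, let n ≥ 1 and let ρ ≥ 0 be an integer. If g : ℝⁿ → ℂ is Lebesgue measurable and ∫_{ℝⁿ} ⟨ξ⟩^{2ρ+n} φ(⟨ξ⟩)² |g(ξ)|² dξ < ∞, then the function ξ ↦ ⟨ξ⟩^{ρ} g(ξ) is Lebesgue integrable on ℝⁿ; moreover ∫_{ℝⁿ} ⟨ξ⟩^{ρ}|g(ξ)| dξ ≤ ( ∫_{ℝⁿ} ⟨ξ⟩^{2ρ+n} φ(⟨ξ⟩)²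 |g(ξ)|² dξ )^{1/2} · ( ∫_{ℝⁿ} ⟨ξ⟩^{−n} φ(⟨ξ⟩)^{−2} dξ )^{1/2}. -/
open MeasureTheory Filter Topology

/-- The "Japanese bracket" `⟨ξ⟩ := (1 + |ξ|²)^{1/2}` of a point `ξ ∈ ℝⁿ`. -/
noncomputable def jbracket {n : ℕ} (ξ : EuclideanSpace ℝ (Fin n)) : ℝ :=
  Real.sqrt (1 + ‖ξ‖ ^ 2)

/-!
By the Cauchy–Schwarz inequality with weight `w(ξ) = ⟨ξ⟩ⁿ φ(⟨ξ⟩)²`, everything reduces to the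
integrability of `1 / w`. In polar coordinates `r = |ξ|` this function is bounded near the origin,
because `1 / φ` is bounded near `1`. Away from the origin substitute `t = √(1 + r²)`: the Jacobian
`r / t` is bounded below and `rⁿ⁻¹ ≤ tⁿ⁻¹`, so the integral of `rⁿ⁻¹ / (tⁿ φ(t)²) dr` is dominated
by the Hörmander integral of `1 / (t φ(t)²) dt`.
-/

open Module
open scoped ENNReal

section CauchySchwarz

variable {α : Type*} [MeasurableSpace α] {μ : Measure α}

lemma lintegral_le_weighted_cauchySchwarz {f w : α → ℝ≥0∞} (hf : AEMeasurable f μ)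
    (hw : AEMeasurable w μ) (hw_zero : ∀ᵐ x ∂μ, w x ≠ 0) (hw_top : ∀ᵐ x ∂μ, w x ≠ ∞) :
    ∫⁻ x, f x ∂μ ≤
      (∫⁻ x, w x * f x ^ 2 ∂μ) ^ (1 / 2 : ℝ) * (∫⁻ x, (w x)⁻¹ ∂μ) ^ (1 / 2 : ℝ) := by
  have sq_sqrt (a : ℝ≥0∞) : (a ^ (1 / 2 : ℝ)) ^ (2 : ℝ) = a := by
    rw [← ENNReal.rpow_mul]; norm_num
  calc ∫⁻ x, f x ∂μ
      = ∫⁻ x, w x ^ (1 / 2 : ℝ) * f x * (w x)⁻¹ ^ (1 / 2 : ℝ) ∂μ := by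
        refine lintegral_congr_ae ?_
        filter_upwards [hw_zero, hw_top] with x h_zero h_top
        rw [mul_right_comm, ← ENNReal.mul_rpow_of_nonneg _ _ (by norm_num),
          ENNReal.mul_inv_cancel h_zero h_top, ENNReal.one_rpow, one_mul]
    _ ≤ (∫⁻ x, (w x ^ (1 / 2 : ℝ) * f x) ^ (2 : ℝ) ∂μ) ^ (1 / 2 : ℝ) *
          (∫⁻ x, ((w x)⁻¹ ^ (1 / 2 : ℝ)) ^ (2 : ℝ) ∂μ) ^ (1 / 2 : ℝ) :=
        ENNReal.lintegral_mul_le_Lp_mul_Lq μ Real.HolderConjugate.two_two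
          ((hw.pow_const _).mul hf) (hw.inv.pow_const _)
    _ = _ := by
        simp only [ENNReal.mul_rpow_of_nonneg _ _ zero_le_two, sq_sqrt, ENNReal.rpow_two]

lemma lintegral_ofReal_le_weighted_cauchySchwarz {f w : α → ℝ} (hf : AEMeasurable f μ)
    (hw : AEMeasurable w μ) (hw_pos : ∀ᵐ x ∂μ, 0 < w x) :
    ∫⁻ x, ENNReal.ofReal (f x) ∂μ ≤
      (∫⁻ x, ENNReal.ofReal (w x * f x ^ 2) ∂μ) ^ (1 / 2 : ℝ) *
        (∫⁻ x, ENNReal.ofReal (w x)⁻¹ ∂μ) ^ (1 / 2 : ℝ) := by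
  calc ∫⁻ x, ENNReal.ofReal (f x) ∂μ
      ≤ ∫⁻ x, ENNReal.ofReal |f x| ∂μ :=
        lintegral_mono fun x ↦ ENNReal.ofReal_le_ofReal (le_abs_self _)
    _ ≤ (∫⁻ x, ENNReal.ofReal (w x) * ENNReal.ofReal |f x| ^ 2 ∂μ) ^ (1 / 2 : ℝ) *
          (∫⁻ x, (ENNReal.ofReal (w x))⁻¹ ∂μ) ^ (1 / 2 : ℝ) :=
        lintegral_le_weighted_cauchySchwarz hf.abs.ennreal_ofReal hw.ennreal_ofReal
          (hw_pos.mono fun x hx ↦ (ENNReal.ofReal_pos.2 hx).ne')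
          (ae_of_all _ fun x ↦ ENNReal.ofReal_ne_top)
    _ = _ := by
        congr 2 <;> refine lintegral_congr_ae (hw_pos.mono fun x hx ↦ ?_)
        · simp only [ENNReal.ofReal_mul hx.le, ← ENNReal.ofReal_pow (abs_nonneg _), sq_abs]
        · exact (ENNReal.ofReal_inv_of_pos hx).symm

end CauchySchwarz

lemma hasDerivAt_sqrt_one_add_sq (r : ℝ) :
    HasDerivAt (fun r : ℝ ↦ √(1 + r ^ 2)) (r / √(1 + r ^ 2)) r := by
  have h_sq : HasDerivAt (fun r : ℝ ↦ 1 + r ^ 2) (2 * r) r := by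
    simpa using (hasDerivAt_pow 2 r).const_add 1
  convert h_sq.sqrt (by positivity) using 1
  exact (mul_div_mul_left _ _ two_ne_zero).symm

lemma strictMonoOn_sqrt_one_add_sq : StrictMonoOn (fun r : ℝ ↦ √(1 + r ^ 2)) (Set.Ici 0) :=
  fun _ hr _ _ hrs ↦ Real.sqrt_lt_sqrt (by positivity) <|
    add_lt_add_right (pow_lt_pow_left₀ hrs hr two_ne_zero) 1

lemma integrableOn_comp_sqrt_one_add_sq {F : Type*} [NormedAddCommGroup F] [NormedSpace ℝ F]
    {a : ℝ} (ha : 0 < a) {h : ℝ → F} (hh : IntegrableOn h (Set.Ioi √(1 + a ^ 2))) :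
    IntegrableOn (fun r ↦ h √(1 + r ^ 2)) (Set.Ioi a) := by
  have h_mono : StrictMonoOn (fun r : ℝ ↦ √(1 + r ^ 2)) (Set.Ici a) :=
    strictMonoOn_sqrt_one_add_sq.mono (Set.Ici_subset_Ici.2 ha.le)
  have h_image : (fun r : ℝ ↦ √(1 + r ^ 2)) '' Set.Ioi a ⊆ Set.Ioi √(1 + a ^ 2) := by
    rintro _ ⟨r, hr, rfl⟩
    exact h_mono Set.self_mem_Ici (Set.Ioi_subset_Ici_self hr) hr
  have h_jacobian : IntegrableOn (fun r ↦ |r / √(1 + r ^ 2)| • h √(1 + r ^ 2)) (Set.Ioi a) :=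
    (integrableOn_image_iff_integrableOn_abs_deriv_smul measurableSet_Ioi
      (fun r _ ↦ (hasDerivAt_sqrt_one_add_sq r).hasDerivWithinAt)
      (h_mono.injOn.mono Set.Ioi_subset_Ici_self) h).1 (hh.mono_set h_image)
  have h_inv_bound : ∀ r ∈ Set.Ioi a, ‖√(1 + r ^ 2) / r‖ ≤ (1 + a) / a := by
    intro r (hr : a < r)
    have hr_pos : 0 < r := ha.trans hr
    have h_sqrt : √(1 + r ^ 2) ≤ 1 + r := Real.sqrt_le_iff.2 ⟨by positivity, by nlinarith⟩
    rw [Real.norm_of_nonneg (by positivity), div_le_div_iff₀ hr_pos ha]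
    nlinarith
  refine (h_jacobian.bdd_smul ((1 + a) / a)
    (φ := fun r ↦ √(1 + r ^ 2) / r) (Measurable.aestronglyMeasurable (by fun_prop))
    ((ae_restrict_mem measurableSet_Ioi).mono h_inv_bound)).congr ?_
  filter_upwards [ae_restrict_mem measurableSet_Ioi] with r (hr : a < r)
  have hr_pos : 0 < r := ha.trans hr
  rw [Pi.smul_apply', smul_smul, abs_of_nonneg (by positivity),
    div_mul_div_cancel₀ hr_pos.ne', div_self (by positivity), one_smul]

lemma integrableOn_one_div_mul_sq_of_lintegral_lt_top {φ : ℝ → ℝ} (hφ : Measurable φ)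
    (hH : ∫⁻ t in Set.Ioi (1 : ℝ), ENNReal.ofReal (1 / (t * φ t ^ 2)) < ∞) :
    IntegrableOn (fun t ↦ 1 / (t * φ t ^ 2)) (Set.Ioi 1) := by
  refine (lintegral_ofReal_ne_top_iff_integrable
    (Measurable.aestronglyMeasurable (by fun_prop)) ?_).1 hH.ne
  filter_upwards [ae_restrict_mem measurableSet_Ioi] with t (ht : 1 < t)
  exact one_div_nonneg.2 (mul_nonneg (zero_le_one.trans ht.le) (sq_nonneg _))

/-- The Japanese bracket `⟨x⟩ = (1 + ‖x‖²)^{1/2}` on an arbitrary normed space; on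
`EuclideanSpace ℝ (Fin n)` it is definitionally `jbracket`. -/
noncomputable def japaneseBracket {E : Type*} [Norm E] (x : E) : ℝ :=
  √(1 + ‖x‖ ^ 2)

section JapaneseBracket

variable {E : Type*} [NormedAddCommGroup E]

lemma one_le_japaneseBracket (x : E) : 1 ≤ japaneseBracket x :=
  Real.one_le_sqrt.2 (le_add_of_nonneg_right (by positivity))

lemma japaneseBracket_pos (x : E) : 0 < japaneseBracket x :=
  zero_lt_one.trans_le (one_le_japaneseBracket x)

lemma measurable_japaneseBracket [MeasurableSpace E] [OpensMeasurableSpace E] :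
    Measurable (japaneseBracket : E → ℝ) := by
  unfold japaneseBracket
  fun_prop

theorem lintegral_japaneseBracket_rpow_mul_norm_le [MeasurableSpace E] [OpensMeasurableSpace E]
    (μ : Measure E) {F : Type*} [NormedAddCommGroup F]
    {φ : ℝ → ℝ} (hφ : Measurable φ) (hφ_pos : ∀ t, 1 ≤ t → 0 < φ t) (s ρ : ℝ)
    {g : E → F} (hg : AEStronglyMeasurable g μ) :
    ∫⁻ x, ENNReal.ofReal (japaneseBracket x ^ ρ * ‖g x‖) ∂μ ≤
      (∫⁻ x, ENNReal.ofReal (japaneseBracket x ^ (2 * ρ + s) *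
        φ (japaneseBracket x) ^ 2 * ‖g x‖ ^ 2) ∂μ) ^ (1 / 2 : ℝ) *
      (∫⁻ x, ENNReal.ofReal (japaneseBracket x ^ (-s) *
        φ (japaneseBracket x) ^ (-2 : ℝ)) ∂μ) ^ (1 / 2 : ℝ) := by
  have h_bracket := measurable_japaneseBracket (E := E)
  have hφ_bracket (x : E) : 0 < φ (japaneseBracket x) := hφ_pos _ (one_le_japaneseBracket x)
  have h_weight_pos (x : E) : 0 < japaneseBracket x ^ s * φ (japaneseBracket x) ^ 2 :=
    mul_pos (Real.rpow_pos_of_pos (japaneseBracket_pos x) s) (pow_pos (hφ_bracket x) 2)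
  have h_square (x : E) : japaneseBracket x ^ (2 * ρ + s) * φ (japaneseBracket x) ^ 2 * ‖g x‖ ^ 2 =
      japaneseBracket x ^ s * φ (japaneseBracket x) ^ 2 * (japaneseBracket x ^ ρ * ‖g x‖) ^ 2 := by
    rw [Real.rpow_add (japaneseBracket_pos x), mul_comm 2 ρ,
      Real.rpow_mul (japaneseBracket_pos x).le, Real.rpow_two]
    ring
  have h_inv (x : E) : japaneseBracket x ^ (-s) * φ (japaneseBracket x) ^ (-2 : ℝ) =
      (japaneseBracket x ^ s * φ (japaneseBracket x) ^ 2)⁻¹ := by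
    rw [mul_inv, Real.rpow_neg (japaneseBracket_pos x).le, Real.rpow_neg (hφ_bracket x).le,
      Real.rpow_two]
  simp only [h_square, h_inv]
  exact lintegral_ofReal_le_weighted_cauchySchwarz
    ((h_bracket.pow_const ρ).aemeasurable.mul hg.norm.aemeasurable)
    (Measurable.aemeasurable (by fun_prop)) (ae_of_all _ h_weight_pos)

variable [NormedSpace ℝ E] [FiniteDimensional ℝ E] [MeasurableSpace E] [BorelSpace E]
  (μ : Measure E) [μ.IsAddHaarMeasure]

theorem integrable_comp_japaneseBracket [Nontrivial E] {F : Type*} [NormedAddCommGroup F]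
    [NormedSpace ℝ F] {k : ℝ → F} (hk : StronglyMeasurable k) {b C : ℝ} (hb : 1 < b)
    (hk_bound : ∀ t ∈ Set.Icc 1 b, ‖k t‖ ≤ C)
    (hk_int : IntegrableOn (fun t ↦ t ^ (finrank ℝ E - 1) • k t) (Set.Ioi b)) :
    Integrable (fun x : E ↦ k (japaneseBracket x)) μ := by
  set d := finrank ℝ E
  obtain ⟨a, ha, rfl⟩ : ∃ a : ℝ, 0 < a ∧ √(1 + a ^ 2) = b := by
    refine ⟨√(b ^ 2 - 1), Real.sqrt_pos.2 (by nlinarith), ?_⟩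
    rw [Real.sq_sqrt (by nlinarith), add_sub_cancel, Real.sqrt_sq (by positivity)]
  have h_meas : AEStronglyMeasurable (fun r : ℝ ↦ r ^ (d - 1) • k √(1 + r ^ 2)) :=
    ((by fun_prop : StronglyMeasurable fun r : ℝ ↦ r ^ (d - 1)).smul
      (hk.comp_measurable (by fun_prop))).aestronglyMeasurable
  have h_near : IntegrableOn (fun r : ℝ ↦ r ^ (d - 1) • k √(1 + r ^ 2)) (Set.Ioc 0 a) := by
    refine Measure.integrableOn_of_bounded (M := a ^ (d - 1) * C) measure_Ioc_lt_top.ne h_meas ?_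
    filter_upwards [ae_restrict_mem measurableSet_Ioc] with r ⟨hr_pos, hra⟩
    have h_mem : √(1 + r ^ 2) ∈ Set.Icc 1 √(1 + a ^ 2) :=
      ⟨Real.one_le_sqrt.2 (le_add_of_nonneg_right (by positivity)), by gcongr⟩
    rw [norm_smul, Real.norm_of_nonneg (by positivity)]
    gcongr
    exact hk_bound _ h_mem
  have h_far : IntegrableOn (fun r : ℝ ↦ r ^ (d - 1) • k √(1 + r ^ 2)) (Set.Ioi a) := by
    refine Integrable.mono (integrableOn_comp_sqrt_one_add_sq ha hk_int) h_meas.restrict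
      (ae_of_all _ fun r ↦ ?_)
    rw [norm_smul, norm_smul, norm_pow, norm_pow, Real.norm_of_nonneg (Real.sqrt_nonneg _)]
    gcongr
    exact Real.abs_le_sqrt (by linarith)
  have h_polar := (integrable_fun_norm_addHaar μ (f := fun r ↦ k √(1 + r ^ 2))).2
  exact h_polar (Set.Ioc_union_Ioi_eq_Ioi ha.le ▸ h_near.union h_far)

theorem integrable_japaneseBracket_rpow_neg_finrank_mul [Nontrivial E] {φ : ℝ → ℝ}
    (hφ : Measurable φ) (hφ_pos : ∀ t, 1 ≤ t → 0 < φ t) {b C : ℝ} (hb : 1 < b)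
    (hφ_inv : ∀ t ∈ Set.Icc 1 b, 1 / φ t ≤ C)
    (hH : ∫⁻ t in Set.Ioi (1 : ℝ), ENNReal.ofReal (1 / (t * φ t ^ 2)) < ∞) :
    Integrable (fun x : E ↦ japaneseBracket x ^ (-(finrank ℝ E : ℝ)) *
      φ (japaneseBracket x) ^ (-2 : ℝ)) μ := by
  refine integrable_comp_japaneseBracket μ
    (k := fun t ↦ t ^ (-(finrank ℝ E : ℝ)) * φ t ^ (-2 : ℝ)) (C := C ^ 2)
    (Measurable.stronglyMeasurable (by fun_prop)) hb ?_ ?_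
  · intro t ht
    have ht_pos : 0 < t := zero_lt_one.trans_le ht.1
    have hφt := hφ_pos t ht.1
    rw [Real.norm_of_nonneg (by positivity)]
    calc t ^ (-(finrank ℝ E : ℝ)) * φ t ^ (-2 : ℝ)
        ≤ 1 * φ t ^ (-2 : ℝ) := by
          gcongr
          exact Real.rpow_le_one_of_one_le_of_nonpos ht.1 (by simp)
      _ = (1 / φ t) ^ 2 := by
          rw [one_mul, Real.rpow_neg hφt.le, Real.rpow_two, one_div, inv_pow]
      _ ≤ C ^ 2 := by
          gcongr
          exact hφ_inv t ht
  · refine ((integrableOn_one_div_mul_sq_of_lintegral_lt_top hφ hH).mono_set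
      (Set.Ioi_subset_Ioi hb.le)).congr_fun (fun t (ht : b < t) ↦ ?_) measurableSet_Ioi
    have ht_pos : 0 < t := zero_lt_one.trans (hb.trans ht)
    have hφt := hφ_pos t (hb.trans ht).le
    obtain ⟨m, hm⟩ := Nat.exists_eq_succ_of_ne_zero (finrank_pos (R := ℝ) (M := E)).ne'
    simp only [hm, Nat.succ_eq_add_one, Nat.add_sub_cancel, smul_eq_mul,
      Real.rpow_neg ht_pos.le, Real.rpow_neg hφt.le, Real.rpow_natCast, Real.rpow_two]
    field_simp
    ring

theorem integrable_of_refined_weighted_square_integrable_general [Nontrivial E]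
    {F : Type*} [NormedAddCommGroup F] {φ : ℝ → ℝ} (hφ : Measurable φ)
    (hφ_pos : ∀ t, 1 ≤ t → 0 < φ t) {b C : ℝ} (hb : 1 < b)
    (hφ_inv : ∀ t ∈ Set.Icc 1 b, 1 / φ t ≤ C)
    (hH : ∫⁻ t in Set.Ioi (1 : ℝ), ENNReal.ofReal (1 / (t * φ t ^ 2)) < ∞)
    {n : ℕ} (hn : finrank ℝ E = n) (ρ : ℝ) {g : E → F} (hg : AEStronglyMeasurable g μ)
    (hfin : ∫⁻ x, ENNReal.ofReal (japaneseBracket x ^ (2 * ρ + n) *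
      φ (japaneseBracket x) ^ 2 * ‖g x‖ ^ 2) ∂μ < ∞) :
    Integrable (fun x ↦ japaneseBracket x ^ ρ * ‖g x‖) μ ∧
      ∫⁻ x, ENNReal.ofReal (japaneseBracket x ^ ρ * ‖g x‖) ∂μ ≤
        (∫⁻ x, ENNReal.ofReal (japaneseBracket x ^ (2 * ρ + n) *
          φ (japaneseBracket x) ^ 2 * ‖g x‖ ^ 2) ∂μ) ^ (1 / 2 : ℝ) *
        (∫⁻ x, ENNReal.ofReal (japaneseBracket x ^ (-(n : ℝ)) *
          φ (japaneseBracket x) ^ (-2 : ℝ)) ∂μ) ^ (1 / 2 : ℝ) := by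
  subst hn
  have h_le := lintegral_japaneseBracket_rpow_mul_norm_le μ hφ hφ_pos (finrank ℝ E) ρ hg
  have h_weight :=
    (integrable_japaneseBracket_rpow_neg_finrank_mul μ hφ hφ_pos hb hφ_inv hH).lintegral_lt_top
  have h_lt_top := h_le.trans_lt <| ENNReal.mul_lt_top
    (ENNReal.rpow_lt_top_of_nonneg (by norm_num) hfin.ne)
    (ENNReal.rpow_lt_top_of_nonneg (by norm_num) h_weight.ne)
  have h_meas : AEStronglyMeasurable (fun x ↦ japaneseBracket x ^ ρ * ‖g x‖) μ :=
    (measurable_japaneseBracket.pow_const ρ).aestronglyMeasurable.mul hg.norm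
  have h_nonneg (x : E) : 0 ≤ japaneseBracket x ^ ρ * ‖g x‖ :=
    mul_nonneg (Real.rpow_nonneg (japaneseBracket_pos x).le ρ) (norm_nonneg _)
  exact ⟨(lintegral_ofReal_ne_top_iff_integrable h_meas (ae_of_all _ h_nonneg)).1 h_lt_top.ne,
    h_le⟩

end JapaneseBracket

/-- Under the Hörmander condition, the weighted Cauchy–Schwarz inequality shows that
`⟨ξ⟩^ρ g(ξ)` is integrable whenever `∫ ⟨ξ⟩^{2ρ+n} φ(⟨ξ⟩)² |g(ξ)|² dξ < ∞`. -/
theorem integrable_of_refined_weighted_square_integrable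
    (φ : ℝ → ℝ) (hφ : SlowlyVaryingM φ)
    (hH : (∫⁻ t in Set.Ioi (1:ℝ), ENNReal.ofReal (1 / (t * φ t ^ 2))) < ⊤)
    (n : ℕ) (hn : 1 ≤ n) (ρ : ℕ)
    (g : EuclideanSpace ℝ (Fin n) → ℂ) (hg : Measurable g)
    (hfin : (∫⁻ ξ, ENNReal.ofReal
        (jbracket ξ ^ (2 * (ρ:ℝ) + n) * φ (jbracket ξ) ^ 2 * ‖g ξ‖ ^ 2)) < ⊤) :
    Integrable (fun ξ : EuclideanSpace ℝ (Fin n) => jbracket ξ ^ (ρ:ℝ) * ‖g ξ‖) ∧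
      (∫⁻ ξ, ENNReal.ofReal (jbracket ξ ^ (ρ:ℝ) * ‖g ξ‖))
        ≤ (∫⁻ ξ, ENNReal.ofReal
              (jbracket ξ ^ (2 * (ρ:ℝ) + n) * φ (jbracket ξ) ^ 2 * ‖g ξ‖ ^ 2)) ^ (1/2 : ℝ)
          * (∫⁻ ξ : EuclideanSpace ℝ (Fin n), ENNReal.ofReal
              (jbracket ξ ^ (-(n:ℝ)) * φ (jbracket ξ) ^ (-2 : ℝ))) ^ (1/2 : ℝ) := by
  obtain ⟨hφ_meas, hφ_pos, hφ_bdd, -⟩ := hφ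
  obtain ⟨C, -, hC⟩ := hφ_bdd 2 one_lt_two
  have : Nonempty (Fin n) := ⟨⟨0, hn⟩⟩
  exact integrable_of_refined_weighted_square_integrable_general volume hφ_meas hφ_pos one_lt_two
    (fun t ht ↦ (hC t ht).2) hH finrank_euclideanSpace_fin ρ hg.aestronglyMeasurable hfin
end

section
/- (Boundedness of multiplication by a Schwartz function on the refined scale) Let φ be a function of the class 𝓜, let s ∈ ℝ, n ≥ 1, and let χ be a Schwartz function on ℝⁿ. Then there exists a constant C > 0 such that for every Schwartz function u on ℝⁿ one has ∫_{ℝⁿ} ⟨ξ⟩^{2s} φ(⟨ξ⟩)² |𝓕(χ·u)(ξ)|² dξ ≤ C ∫_{ℝⁿ} ⟨ξ⟩^{2s} φ(⟨ξ⟩)² |𝓕u(ξ)|² dξ, where 𝓕 denotes the Fourier transform. Consequently multiplication by χ is a bounded operator on H^{s,φ}(ℝⁿ). -/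
open MeasureTheory Filter Topology

/-!
For `φ` slowly varying, `h = log ∘ φ ∘ exp` satisfies `h (x + u) - h x → 0` for every `u`, hence
locally uniformly in `u` (Karamata), and chaining unit steps gives Potter's bound
`φ t ≤ C * max (t / r) (r / t) ^ δ * φ r`. By Peetre's inequality `⟨ξ + η⟩ ≤ (1 + |ξ|) ⟨η⟩`, the
weight `w ξ = ⟨ξ⟩ ^ (2 * s) * φ ⟨ξ⟩ ^ 2` therefore satisfies `w (ξ + η) ≤ C (1 + |ξ|) ^ N w η`.

Since `𝓕 (χ u) = 𝓕 χ ⋆ 𝓕 u`, the Cauchy-Schwarz inequality for the measure `|𝓕 χ(η)| dη` and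
Tonelli's theorem bound the left side by
`‖𝓕 χ‖₁ · ∫ C (1 + |η|) ^ N |𝓕 χ(η)| dη · ∫ w |𝓕 u|²`, where the first two factors are finite
because `𝓕 χ` is a Schwartz function.
-/

open FourierTransform SchwartzMap Convolution
open scoped ENNReal NNReal

section UniformConvergence

variable {F : Type*} [NormedAddCommGroup F] {h : ℝ → F}

theorem norm_sub_le_mul_one_add_of_unit_steps {X δ : ℝ}
    (hstep : ∀ x ≥ X, ∀ v ∈ Set.Icc (0 : ℝ) 1, ‖h (x + v) - h x‖ ≤ δ)
    {x y : ℝ} (hx : X ≤ x) (hy : X ≤ y) : ‖h x - h y‖ ≤ δ * (1 + |x - y|) := by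
  wlog hyx : y ≤ x generalizing x y
  · rw [norm_sub_rev, abs_sub_comm]
    exact this hy hx (le_of_not_ge hyx)
  have hδ : 0 ≤ δ := (norm_nonneg _).trans (hstep x hx 0 (by simp))
  set n := ⌊x - y⌋₊
  have hn : (n : ℝ) ≤ x - y := Nat.floor_le (sub_nonneg.2 hyx)
  have hn' : x - y < n + 1 := Nat.lt_floor_add_one _
  have hwhole : ‖h (y + n) - h y‖ ≤ n * δ := by
    have := dist_le_range_sum_of_dist_le (f := fun k : ℕ ↦ h (y + k)) (d := fun _ ↦ δ) n
      fun {k} _ ↦ by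
        have hk : X ≤ y + k := by linarith [k.cast_nonneg (α := ℝ)]
        simpa [dist_eq_norm, norm_sub_rev, add_assoc] using hstep (y + k) hk 1 (by simp)
    simpa [dist_eq_norm, norm_sub_rev] using this
  have hfract : ‖h x - h (y + n)‖ ≤ δ := by
    simpa using hstep (y + n) (by linarith [n.cast_nonneg (α := ℝ)]) (x - (y + n))
      ⟨by linarith, by linarith⟩
  calc ‖h x - h y‖ ≤ ‖h x - h (y + n)‖ + ‖h (y + n) - h y‖ := norm_sub_le_norm_sub_add_norm_sub ..
    _ ≤ δ + n * δ := add_le_add hfract hwhole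
    _ ≤ δ * (1 + |x - y|) := by
      rw [abs_of_nonneg (sub_nonneg.2 hyx)]
      nlinarith

variable [MeasurableSpace F] [BorelSpace F]

theorem tendsto_setLIntegral_min_enorm_add_sub (hm : Measurable h)
    (hl : ∀ u, Tendsto (fun x ↦ h (x + u) - h x) atTop (𝓝 0)) {ε : ℝ≥0∞} (hε : ε ≠ ∞)
    {S : Set ℝ} (hS : volume S ≠ ∞) :
    Tendsto (fun x ↦ ∫⁻ u in S, min ε ‖h (x + u) - h x‖ₑ) atTop (𝓝 0) := by
  have hlim (u : ℝ) : Tendsto (fun x ↦ min ε ‖h (x + u) - h x‖ₑ) atTop (𝓝 0) := by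
    simpa using (tendsto_const_nhds (x := ε)).min (hl u).enorm
  simpa using tendsto_lintegral_filter_of_dominated_convergence (fun _ ↦ ε)
    (Eventually.of_forall fun x ↦ by fun_prop)
    (Eventually.of_forall fun x ↦ ae_of_all _ fun u ↦ min_le_left _ _)
    (by simpa using ENNReal.mul_ne_top hε hS) (ae_of_all (volume.restrict S) hlim)

/- If `‖h (x + v) - h x‖ ≥ ε`, then for every `u` at least one of the increments from `x` and from
`x + v` to `x + u` is at least `ε / 2`, so the truncated increments from `x` or those from `x + v`
have a large integral over `u ∈ [0, 1]`; both integrals tend to zero by dominated convergence. -/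
theorem tendstoUniformlyOn_add_sub_Icc (hm : Measurable h)
    (hl : ∀ u, Tendsto (fun x ↦ h (x + u) - h x) atTop (𝓝 0)) (a b : ℝ) :
    TendstoUniformlyOn (fun x v ↦ h (x + v) - h x) 0 atTop (Set.Icc a b) := by
  rw [EMetric.tendstoUniformlyOn_iff]
  intro ε₀ hε₀
  set ε := min ε₀ 1
  have hε : 0 < ε := lt_min hε₀ one_pos
  have hε_top : ε ≠ ∞ := ((min_le_right _ _).trans_lt ENNReal.one_lt_top).ne
  set f : ℝ → ℝ → ℝ≥0∞ := fun x u ↦ min ε ‖h (x + u) - h x‖ₑ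
  have hfm (x : ℝ) : Measurable (f x) := by fun_prop
  have hsmall (c d : ℝ) : ∀ᶠ x in atTop, ∫⁻ u in Set.Icc c d, f x u < ε / 2 :=
    (tendsto_setLIntegral_min_enorm_add_sub hm hl hε_top (by simp)).eventually_lt_const
      (ENNReal.half_pos hε.ne')
  obtain ⟨Y, hY⟩ := eventually_atTop.1 (hsmall (-b) (1 - a))
  filter_upwards [hsmall 0 1, eventually_ge_atTop (Y - a)] with x hx hxY v hv
  by_contra! hlarge
  have hpt (u : ℝ) : ε ≤ f x u + f (x + v) (u - v) := by
    have htri : ε ≤ ‖h (x + u) - h x‖ₑ + ‖h (x + v + (u - v)) - h (x + v)‖ₑ := calc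
      ε ≤ ε₀ := min_le_left _ _
      _ ≤ edist (h x) (h (x + v)) := by simpa [edist_eq_enorm_sub] using hlarge
      _ ≤ edist (h (x + u)) (h x) + edist (h (x + u)) (h (x + v)) := edist_triangle_left ..
      _ = _ := by simp only [edist_eq_enorm_sub, add_add_sub_cancel]
    calc ε = min ε _ := (min_eq_left htri).symm
      _ = min ε (f x u + f (x + v) (u - v)) := min_add_distrib ..
      _ ≤ f x u + f (x + v) (u - v) := min_le_right _ _
  have hshift : ∫⁻ u in Set.Icc 0 1, f (x + v) (u - v) ≤
      ∫⁻ u in Set.Icc (-b) (1 - a), f (x + v) u := by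
    rw [← (measurePreserving_sub_right volume v).setLIntegral_comp_preimage measurableSet_Icc
      (hfm (x + v))]
    refine lintegral_mono_set fun u hu ↦ ?_
    exact ⟨by linarith [hu.1, hv.2], by linarith [hu.2, hv.1]⟩
  have : ε < ε := calc
    ε = ∫⁻ _ in Set.Icc (0 : ℝ) 1, ε := by simp
    _ ≤ ∫⁻ u in Set.Icc 0 1, (f x u + f (x + v) (u - v)) := lintegral_mono hpt
    _ = (∫⁻ u in Set.Icc 0 1, f x u) + ∫⁻ u in Set.Icc 0 1, f (x + v) (u - v) :=
      lintegral_add_left (hfm x) _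
    _ < ε / 2 + ε / 2 :=
      ENNReal.add_lt_add hx (hshift.trans_lt (hY _ (by linarith [hv.1])))
    _ = ε := ENNReal.add_halves ε
  exact this.false

theorem exists_norm_sub_le_add_mul_abs_sub (hm : Measurable h)
    (hl : ∀ u, Tendsto (fun x ↦ h (x + u) - h x) atTop (𝓝 0))
    (hb : ∀ b, ∃ B, ∀ x ∈ Set.Icc 0 b, ‖h x‖ ≤ B) {δ : ℝ} (hδ : 0 < δ) :
    ∃ A, ∀ x ≥ 0, ∀ y ≥ 0, ‖h x - h y‖ ≤ A + δ * |x - y| := by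
  obtain ⟨X, hX⟩ := eventually_atTop.1
    (Metric.tendstoUniformlyOn_iff.1 (tendstoUniformlyOn_add_sub_Icc hm hl 0 1) δ hδ)
  have hstep : ∀ x ≥ X, ∀ v ∈ Set.Icc (0 : ℝ) 1, ‖h (x + v) - h x‖ ≤ δ := fun x hx v hv ↦ by
    simpa [dist_eq_norm, norm_sub_rev] using (hX x hx v hv).le
  obtain ⟨B, hB⟩ := hb (max X 0)
  have hB₀ : 0 ≤ B := (norm_nonneg _).trans (hB 0 (by simp))
  have hmax (x : ℝ) (hx : 0 ≤ x) : ‖h x - h (max x X)‖ ≤ 2 * B := by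
    rcases le_total X x with hXx | hxX
    · simpa [hXx] using hB₀
    · have hX₀ : 0 ≤ X := hx.trans hxX
      calc ‖h x - h (max x X)‖ ≤ ‖h x‖ + ‖h (max x X)‖ := norm_sub_le _ _
        _ ≤ B + B := add_le_add (hB x (by simp [hx, hxX])) (hB _ (by simp [hX₀, hxX]))
        _ = 2 * B := (two_mul B).symm
  refine ⟨4 * B + δ, fun x hx y hy ↦ ?_⟩
  have hfar := norm_sub_le_mul_one_add_of_unit_steps hstep (le_max_right x X) (le_max_right y X)
  calc ‖h x - h y‖
      ≤ ‖h x - h (max x X)‖ + ‖h (max x X) - h (max y X)‖ + ‖h (max y X) - h y‖ := by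
        simpa only [dist_eq_norm] using dist_triangle4 (h x) (h (max x X)) (h (max y X)) (h y)
    _ ≤ 2 * B + δ * (1 + |x - y|) + 2 * B := by
      gcongr
      · exact hmax x hx
      · exact hfar.trans (by grw [abs_max_sub_max_le_abs x y X])
      · rw [norm_sub_rev]
        exact hmax y hy
    _ = 4 * B + δ + δ * |x - y| := by ring

end UniformConvergence

theorem exp_abs_log_sub_log {t r : ℝ} (ht : 0 < t) (hr : 0 < r) :
    Real.exp |Real.log t - Real.log r| = max (t / r) (r / t) := by
  rw [abs_eq_max_neg, neg_sub, Real.exp_monotone.map_max, Real.exp_sub, Real.exp_sub,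
    Real.exp_log ht, Real.exp_log hr]

theorem rpow_le_max_div_rpow_abs_mul {t r : ℝ} (ht : 0 < t) (hr : 0 < r) (s : ℝ) :
    t ^ s ≤ max (t / r) (r / t) ^ |s| * r ^ s := by
  rw [← exp_abs_log_sub_log ht hr, ← Real.exp_mul, Real.rpow_def_of_pos ht,
    Real.rpow_def_of_pos hr, ← Real.exp_add, Real.exp_le_exp, ← abs_mul]
  linarith [le_abs_self ((Real.log t - Real.log r) * s)]

namespace SlowlyVaryingM

variable {φ : ℝ → ℝ}

theorem tendsto_log_comp_exp_add_sub (hφ : SlowlyVaryingM φ) (u : ℝ) :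
    Tendsto (fun x ↦ Real.log (φ (Real.exp (x + u))) - Real.log (φ (Real.exp x))) atTop (𝓝 0) := by
  obtain ⟨-, hpos, -, hslow⟩ := hφ
  have hlog := ((hslow _ (Real.exp_pos u)).comp Real.tendsto_exp_atTop).log one_ne_zero
  rw [Real.log_one] at hlog
  refine hlog.congr' ?_
  filter_upwards [eventually_ge_atTop 0, eventually_ge_atTop (-u)] with x hx hxu
  rw [Function.comp_apply, ← Real.exp_add, add_comm u x, Real.log_div
    (hpos _ (Real.one_le_exp (by linarith))).ne' (hpos _ (Real.one_le_exp hx)).ne']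

theorem exists_norm_log_comp_exp_le (hφ : SlowlyVaryingM φ) (b : ℝ) :
    ∃ B, ∀ x ∈ Set.Icc 0 b, ‖Real.log (φ (Real.exp x))‖ ≤ B := by
  obtain ⟨-, hpos, hbdd, -⟩ := hφ
  obtain ⟨C, -, hC⟩ := hbdd (Real.exp (max b 1)) (Real.one_lt_exp_iff.2 (by simp))
  refine ⟨Real.log C, fun x hx ↦ ?_⟩
  have hx₁ : 1 ≤ Real.exp x := Real.one_le_exp hx.1
  obtain ⟨hle, hinv⟩ := hC _ ⟨hx₁, Real.exp_le_exp.2 (le_max_of_le_left hx.2)⟩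
  have hφx := hpos _ hx₁
  have hlog_inv := Real.log_le_log (by positivity) hinv
  rw [one_div, Real.log_inv] at hlog_inv
  exact abs_le.2 ⟨by linarith, Real.log_le_log hφx hle⟩

theorem potter_bound (hφ : SlowlyVaryingM φ) {δ : ℝ} (hδ : 0 < δ) :
    ∃ C > 0, ∀ t ≥ 1, ∀ r ≥ 1, φ t ≤ C * max (t / r) (r / t) ^ δ * φ r := by
  have hm : Measurable fun x ↦ Real.log (φ (Real.exp x)) :=
    (hφ.1.comp Real.measurable_exp).log
  obtain ⟨A, hA⟩ := exists_norm_sub_le_add_mul_abs_sub hm hφ.tendsto_log_comp_exp_add_sub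
    hφ.exists_norm_log_comp_exp_le hδ
  refine ⟨Real.exp A, Real.exp_pos A, fun t ht r hr ↦ ?_⟩
  have ht₀ : 0 < t := one_pos.trans_le ht
  have hr₀ : 0 < r := one_pos.trans_le hr
  have hlog := (le_abs_self _).trans (hA _ (Real.log_nonneg ht) _ (Real.log_nonneg hr))
  rw [Real.exp_log ht₀, Real.exp_log hr₀] at hlog
  calc φ t = Real.exp (Real.log (φ t)) := (Real.exp_log (hφ.2.1 t ht)).symm
    _ ≤ Real.exp (A + |Real.log t - Real.log r| * δ + Real.log (φ r)) :=
      Real.exp_le_exp.2 (by linarith)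
    _ = Real.exp A * max (t / r) (r / t) ^ δ * φ r := by
      rw [Real.exp_add, Real.exp_add, Real.exp_mul, exp_abs_log_sub_log ht₀ hr₀,
        Real.exp_log (hφ.2.1 r hr)]

theorem exists_rpow_mul_sq_le (hφ : SlowlyVaryingM φ) (s : ℝ) :
    ∃ C > 0, ∀ t ≥ 1, ∀ r ≥ 1,
      t ^ s * φ t ^ 2 ≤ C * max (t / r) (r / t) ^ (|s| + 2) * (r ^ s * φ r ^ 2) := by
  obtain ⟨C, hC, hpotter⟩ := hφ.potter_bound one_pos
  refine ⟨C ^ 2, by positivity, fun t ht r hr ↦ ?_⟩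
  have ht₀ : 0 < t := one_pos.trans_le ht
  have hr₀ : 0 < r := one_pos.trans_le hr
  have hφt := hφ.2.1 t ht
  have hM : 0 < max (t / r) (r / t) := lt_max_of_lt_left (by positivity)
  calc t ^ s * φ t ^ 2
      ≤ (max (t / r) (r / t) ^ |s| * r ^ s) * (C * max (t / r) (r / t) ^ (1 : ℝ) * φ r) ^ 2 := by
        gcongr
        · exact rpow_le_max_div_rpow_abs_mul ht₀ hr₀ s
        · exact hpotter t ht r hr
    _ = C ^ 2 * max (t / r) (r / t) ^ (|s| + 2) * (r ^ s * φ r ^ 2) := by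
      rw [Real.rpow_add hM, Real.rpow_one, Real.rpow_two]
      ring

end SlowlyVaryingM

section Bracket

variable {n : ℕ}

theorem one_le_jbracket (ξ : EuclideanSpace ℝ (Fin n)) : 1 ≤ jbracket ξ :=
  Real.one_le_sqrt.2 (le_add_of_nonneg_right (sq_nonneg _))

theorem measurable_jbracket : Measurable (jbracket (n := n)) := by
  unfold jbracket
  fun_prop

theorem jbracket_add_le (ξ η : EuclideanSpace ℝ (Fin n)) :
    jbracket (ξ + η) ≤ (1 + ‖ξ‖) * jbracket η := by
  have hη : ‖η‖ ≤ jbracket η := Real.le_sqrt_of_sq_le (by linarith)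
  have hsq : jbracket η ^ 2 = 1 + ‖η‖ ^ 2 := Real.sq_sqrt (by positivity)
  have hsum : jbracket (ξ + η) ≤ ‖ξ‖ + jbracket η := by
    refine Real.sqrt_le_iff.2 ⟨by linarith [norm_nonneg ξ, norm_nonneg η], ?_⟩
    calc 1 + ‖ξ + η‖ ^ 2 ≤ 1 + (‖ξ‖ + ‖η‖) ^ 2 := by
          gcongr
          exact norm_add_le ξ η
      _ ≤ (‖ξ‖ + jbracket η) ^ 2 := by nlinarith [norm_nonneg ξ]
  nlinarith [norm_nonneg ξ, one_le_jbracket η]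

theorem max_jbracket_div_le (ξ η : EuclideanSpace ℝ (Fin n)) :
    max (jbracket (ξ + η) / jbracket η) (jbracket η / jbracket (ξ + η)) ≤ 1 + ‖ξ‖ := by
  have hpos (ζ : EuclideanSpace ℝ (Fin n)) : 0 < jbracket ζ := one_pos.trans_le (one_le_jbracket ζ)
  refine max_le ((div_le_iff₀ (hpos _)).2 (jbracket_add_le ξ η)) ((div_le_iff₀ (hpos _)).2 ?_)
  simpa using jbracket_add_le (-ξ) (ξ + η)

end Bracket

/-- A weight which changes by at most a polynomial factor under translation: the growth condition
on Hörmander's temperate weight functions. Weights take values in `ℝ≥0∞` because they are only ever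
integrated. -/
structure IsModerateWeight {E : Type*} [NormedAddCommGroup E] [MeasurableSpace E]
    (w : E → ℝ≥0∞) : Prop where
  measurable : Measurable w
  exists_add_le : ∃ C : ℝ≥0, ∃ N : ℕ, ∀ ξ η, w (ξ + η) ≤ C * (1 + ‖ξ‖ₑ) ^ N * w η

theorem isModerateWeight_comp_jbracket {n : ℕ} {g : ℝ → ℝ} (hg : Measurable g)
    (hg₀ : ∀ t ≥ 1, 0 ≤ g t) {C a : ℝ} (hC : 0 ≤ C) (ha : 0 ≤ a)
    (hgC : ∀ t ≥ 1, ∀ r ≥ 1, g t ≤ C * max (t / r) (r / t) ^ a * g r) :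
    IsModerateWeight fun ξ : EuclideanSpace ℝ (Fin n) ↦ ENNReal.ofReal (g (jbracket ξ)) where
  measurable := (hg.comp measurable_jbracket).ennreal_ofReal
  exists_add_le := by
    refine ⟨C.toNNReal, ⌈a⌉₊, fun ξ η ↦ ?_⟩
    have hreal : g (jbracket (ξ + η)) ≤ C * (1 + ‖ξ‖) ^ ⌈a⌉₊ * g (jbracket η) := calc
      _ ≤ C * max (jbracket (ξ + η) / jbracket η) (jbracket η / jbracket (ξ + η)) ^ a *
          g (jbracket η) := hgC _ (one_le_jbracket _) _ (one_le_jbracket _)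
      _ ≤ C * (1 + ‖ξ‖) ^ a * g (jbracket η) := by
        gcongr
        · exact hg₀ _ (one_le_jbracket _)
        · have h₀ (ζ : EuclideanSpace ℝ (Fin n)) : 0 ≤ jbracket ζ := Real.sqrt_nonneg _
          exact le_max_of_le_left (div_nonneg (h₀ _) (h₀ _))
        · exact max_jbracket_div_le ξ η
      _ ≤ C * (1 + ‖ξ‖) ^ ⌈a⌉₊ * g (jbracket η) := by
        rw [← Real.rpow_natCast]
        gcongr
        · exact hg₀ _ (one_le_jbracket _)
        · linarith [norm_nonneg ξ]
        · exact Nat.le_ceil a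
    calc ENNReal.ofReal (g (jbracket (ξ + η)))
        ≤ ENNReal.ofReal (C * (1 + ‖ξ‖) ^ ⌈a⌉₊ * g (jbracket η)) :=
          ENNReal.ofReal_le_ofReal hreal
      _ = C.toNNReal * (1 + ‖ξ‖ₑ) ^ ⌈a⌉₊ * ENNReal.ofReal (g (jbracket η)) := by
        rw [ENNReal.ofReal_mul (by positivity), ENNReal.ofReal_mul hC,
          ENNReal.ofReal_pow (by positivity), ENNReal.ofReal_add zero_le_one (norm_nonneg ξ),
          ENNReal.ofReal_one, ofReal_norm, ENNReal.ofReal]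

theorem SlowlyVaryingM.isModerateWeight {φ : ℝ → ℝ} (hφ : SlowlyVaryingM φ) (s : ℝ) (n : ℕ) :
    IsModerateWeight fun ξ : EuclideanSpace ℝ (Fin n) ↦
      ENNReal.ofReal (jbracket ξ ^ s * φ (jbracket ξ) ^ 2) := by
  obtain ⟨C, hC, hle⟩ := hφ.exists_rpow_mul_sq_le s
  refine isModerateWeight_comp_jbracket (g := fun t ↦ t ^ s * φ t ^ 2) ?_ ?_ hC.le
    (by positivity) hle
  · exact (measurable_id.pow_const s).mul (hφ.1.pow_const 2)
  · exact fun t ht ↦ by positivity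

section Young

variable {G : Type*} [MeasurableSpace G] {μ : Measure G}

theorem sq_lintegral_mul_le {k f : G → ℝ≥0∞} (hk : AEMeasurable k μ) (hf : AEMeasurable f μ) :
    (∫⁻ y, k y * f y ∂μ) ^ 2 ≤ (∫⁻ y, k y ∂μ) * ∫⁻ y, k y * f y ^ 2 ∂μ := by
  have hsqrt (a b : ℝ≥0∞) : a ^ (1 / 2 : ℝ) * (a * b ^ 2) ^ (1 / 2 : ℝ) = a * b := by
    rw [← ENNReal.mul_rpow_of_nonneg _ _ (by norm_num), ← mul_assoc, ← sq, ← mul_pow,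
      ← ENNReal.rpow_natCast, ← ENNReal.rpow_mul]
    norm_num
  have hsq (a : ℝ≥0∞) : (a ^ (1 / 2 : ℝ)) ^ 2 = a := by
    rw [← ENNReal.rpow_natCast, ← ENNReal.rpow_mul]
    norm_num
  have hholder := ENNReal.lintegral_mul_norm_pow_le (p := 1 / 2) (q := 1 / 2) hk
    (hk.mul (hf.pow_const 2)) (by norm_num) (by norm_num) (by norm_num)
  simp only [Pi.mul_apply, hsqrt] at hholder
  simpa only [mul_pow, hsq] using pow_le_pow_left' hholder 2

variable [AddGroup G] [MeasurableAdd₂ G] [MeasurableNeg G] [μ.IsAddLeftInvariant] [SFinite μ]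

/- Cauchy-Schwarz with respect to `k μ` gives `(k ⋆ f)² ≤ ‖k‖₁ (k ⋆ f²)`, and the weight passes
through the convolution at the cost of the factor `v`. -/
theorem lintegral_mul_sq_lconvolution_le {w v k f : G → ℝ≥0∞} (hw : Measurable w)
    (hv : Measurable v) (hk : Measurable k) (hf : Measurable f)
    (hwv : ∀ y x, w (y + x) ≤ v y * w x) :
    ∫⁻ x, w x * (k ⋆ₗ[μ] f) x ^ 2 ∂μ ≤
      (∫⁻ y, k y ∂μ) * (∫⁻ y, v y * k y ∂μ) * ∫⁻ x, w x * f x ^ 2 ∂μ := by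
  have hpt (x : G) : w x * (k ⋆ₗ[μ] f) x ^ 2 ≤
      (∫⁻ y, k y ∂μ) * ∫⁻ y, v y * k y * (w (-y + x) * f (-y + x) ^ 2) ∂μ := calc
    _ ≤ w x * ((∫⁻ y, k y ∂μ) * ∫⁻ y, k y * f (-y + x) ^ 2 ∂μ) := by
      gcongr
      exact sq_lintegral_mul_le (by fun_prop) (by fun_prop)
    _ = (∫⁻ y, k y ∂μ) * ∫⁻ y, w x * (k y * f (-y + x) ^ 2) ∂μ := by
      rw [lintegral_const_mul _ (by fun_prop), mul_left_comm]
    _ ≤ _ := by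
      refine mul_le_mul_right (lintegral_mono fun y ↦ ?_) _
      calc w x * (k y * f (-y + x) ^ 2)
          ≤ v y * w (-y + x) * (k y * f (-y + x) ^ 2) := by
            gcongr
            simpa using hwv y (-y + x)
        _ = v y * k y * (w (-y + x) * f (-y + x) ^ 2) := by ring
  calc ∫⁻ x, w x * (k ⋆ₗ[μ] f) x ^ 2 ∂μ
      ≤ ∫⁻ x, (∫⁻ y, k y ∂μ) * ∫⁻ y, v y * k y * (w (-y + x) * f (-y + x) ^ 2) ∂μ ∂μ :=
        lintegral_mono hpt
    _ = (∫⁻ y, k y ∂μ) * ∫⁻ y, ∫⁻ x, v y * k y * (w (-y + x) * f (-y + x) ^ 2) ∂μ ∂μ := by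
      rw [lintegral_const_mul _ (by fun_prop), lintegral_lintegral_swap (by fun_prop)]
    _ = (∫⁻ y, k y ∂μ) * ∫⁻ y, v y * k y * ∫⁻ x, w x * f x ^ 2 ∂μ ∂μ := by
      congr 2 with y
      rw [lintegral_const_mul _ (by fun_prop),
        lintegral_add_left_eq_self (fun x ↦ w x * f x ^ 2) (-y)]
    _ = _ := by rw [lintegral_mul_const _ (by fun_prop), mul_assoc]

end Young

section Fourier

theorem enorm_convolution_le_lconvolution {𝕜 G F₁ F₂ F₃ : Type*} [NontriviallyNormedField 𝕜]
    [NormedAddCommGroup F₁] [NormedSpace 𝕜 F₁] [NormedAddCommGroup F₂] [NormedSpace 𝕜 F₂]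
    [NormedAddCommGroup F₃] [NormedSpace 𝕜 F₃] [NormedSpace ℝ F₃] [AddCommGroup G]
    [MeasurableSpace G] (B : F₁ →L[𝕜] F₂ →L[𝕜] F₃) (f : G → F₁) (g : G → F₂) (μ : Measure G)
    (x : G) : ‖(f ⋆[B, μ] g) x‖ₑ ≤ ‖B‖ₑ * ((‖f ·‖ₑ) ⋆ₗ[μ] (‖g ·‖ₑ)) x := calc
  _ ≤ ∫⁻ y, ‖B (f y) (g (x - y))‖ₑ ∂μ := enorm_integral_le_lintegral_enorm _
  _ ≤ ∫⁻ y, ‖B‖ₑ * (‖f y‖ₑ * ‖g (-y + x)‖ₑ) ∂μ := lintegral_mono fun y ↦ by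
    rw [← mul_assoc, neg_add_eq_sub]
    exact B.le_opENorm₂ (f y) (g (x - y))
  _ = _ := lintegral_const_mul' _ _ enorm_ne_top

theorem lintegral_one_add_enorm_pow_mul_lt_top {E F : Type*} [NormedAddCommGroup E]
    [NormedSpace ℝ E] [MeasurableSpace E] [BorelSpace E] [SecondCountableTopology E]
    [NormedAddCommGroup F] [NormedSpace ℝ F] (μ : Measure E) [μ.HasTemperateGrowth] (f : 𝓢(E, F))
    (N : ℕ) : ∫⁻ x, (1 + ‖x‖ₑ) ^ N * ‖f x‖ₑ ∂μ < ∞ := by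
  have hint : Integrable (fun x ↦ (1 + ‖x‖) ^ N * ‖f x‖) μ := by
    simp only [add_pow, one_pow, one_mul, Finset.sum_mul, mul_right_comm _ (Nat.choose _ _ : ℝ)]
    exact integrable_finsetSum _ fun k _ ↦ (f.integrable_pow_mul μ _).mul_const _
  have henorm (x : E) : ‖(1 + ‖x‖) ^ N * ‖f x‖‖ₑ = (1 + ‖x‖ₑ) ^ N * ‖f x‖ₑ := by
    rw [enorm_mul, enorm_norm, enorm_pow, Real.enorm_of_nonneg (by positivity),
      ENNReal.ofReal_add zero_le_one (norm_nonneg x), ENNReal.ofReal_one, ofReal_norm]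
  simpa only [HasFiniteIntegral, henorm] using hint.2

variable {E : Type*} [NormedAddCommGroup E] [InnerProductSpace ℝ E] [FiniteDimensional ℝ E]
  [MeasurableSpace E] [BorelSpace E] {F₁ F₂ F₃ : Type*} [NormedAddCommGroup F₁] [NormedSpace ℂ F₁]
  [NormedAddCommGroup F₂] [NormedSpace ℂ F₂] [NormedAddCommGroup F₃] [NormedSpace ℂ F₃]

theorem fourierInv_apply_neg (f : 𝓢(E, F₁)) (ξ : E) : 𝓕⁻ f (-ξ) = 𝓕 f ξ := by
  rw [fourierInv_coe, Real.fourierInv_eq_fourier_neg, neg_neg, fourier_coe]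

variable [CompleteSpace F₁] [CompleteSpace F₂] [CompleteSpace F₃] (B : F₁ →L[ℂ] F₂ →L[ℂ] F₃)

theorem fourier_bilin_eq_convolution (f : 𝓢(E, F₁)) (g : 𝓢(E, F₂)) (ξ : E) :
    𝓕 (fun x ↦ B (f x) (g x)) ξ = ((𝓕 f : 𝓢(E, F₁)) ⋆[B] (𝓕 g : 𝓢(E, F₂))) ξ := by
  have hinv : 𝓕⁻ (pairing B f g) = SchwartzMap.convolution B (𝓕⁻ f) (𝓕⁻ g) := by
    rw [← fourierInv_fourier_eq (F := 𝓢(E, F₃)) (SchwartzMap.convolution B _ _),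
      fourier_convolution, fourier_fourierInv_eq, fourier_fourierInv_eq]
  calc 𝓕 (fun x ↦ B (f x) (g x)) ξ
      = 𝓕⁻ (pairing B f g) (-ξ) := (fourierInv_apply_neg (pairing B f g) ξ).symm
    _ = ∫ η, B (𝓕⁻ f η) (𝓕⁻ g (-ξ - η)) := by rw [hinv, convolution_apply, convolution_def]
    _ = ∫ η, B (𝓕⁻ f (-η)) (𝓕⁻ g (-(ξ - η))) := by
      rw [← integral_neg_eq_self]
      simp only [neg_sub, sub_neg_eq_add, neg_add_eq_sub]
    _ = _ := by simp only [fourierInv_apply_neg, convolution_def]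

theorem schwartz_multiplier_bounded_on_refined_scale_general {w : E → ℝ≥0∞}
    (hw : IsModerateWeight w) (χ : 𝓢(E, F₁)) :
    ∃ C : ℝ≥0, 0 < C ∧ ∀ u : 𝓢(E, F₂),
      ∫⁻ ξ, w ξ * ‖𝓕 (fun x ↦ B (χ x) (u x)) ξ‖ₑ ^ 2 ≤
        C * ∫⁻ ξ, w ξ * ‖𝓕 (fun x ↦ u x) ξ‖ₑ ^ 2 := by
  obtain ⟨A, N, hA⟩ := hw.exists_add_le
  set k : E → ℝ≥0∞ := fun η ↦ ‖𝓕 χ η‖ₑ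
  set K := ‖B‖ₑ ^ 2 * ((∫⁻ η, k η) * ∫⁻ η, A * (1 + ‖η‖ₑ) ^ N * k η)
  have hk : ∫⁻ η, k η ≠ ∞ := (𝓕 χ).integrable.hasFiniteIntegral.ne
  have hvk : ∫⁻ η, A * (1 + ‖η‖ₑ) ^ N * k η ≠ ∞ := by
    simp only [mul_assoc]
    rw [lintegral_const_mul' _ _ ENNReal.coe_ne_top]
    exact ENNReal.mul_ne_top ENNReal.coe_ne_top
      (lintegral_one_add_enorm_pow_mul_lt_top volume (𝓕 χ) N).ne
  have hK : K ≠ ∞ := by finiteness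
  refine ⟨K.toNNReal + 1, by positivity, fun u ↦ ?_⟩
  have hyoung := lintegral_mul_sq_lconvolution_le (μ := volume) (k := k) (f := (‖𝓕 u ·‖ₑ))
    hw.measurable (by fun_prop) (𝓕 χ).continuous.enorm.measurable
    (𝓕 u).continuous.enorm.measurable hA
  calc ∫⁻ ξ, w ξ * ‖𝓕 (fun x ↦ B (χ x) (u x)) ξ‖ₑ ^ 2
      ≤ ∫⁻ ξ, ‖B‖ₑ ^ 2 * (w ξ * (k ⋆ₗ (‖𝓕 u ·‖ₑ)) ξ ^ 2) := lintegral_mono fun ξ ↦ by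
        rw [fourier_bilin_eq_convolution, mul_left_comm, ← mul_pow]
        gcongr
        exact enorm_convolution_le_lconvolution B _ _ _ _
    _ = ‖B‖ₑ ^ 2 * ∫⁻ ξ, w ξ * (k ⋆ₗ (‖𝓕 u ·‖ₑ)) ξ ^ 2 :=
      lintegral_const_mul' _ _ (by finiteness)
    _ ≤ K * ∫⁻ ξ, w ξ * ‖𝓕 u ξ‖ₑ ^ 2 := by
      rw [mul_assoc]
      gcongr
    _ ≤ (K.toNNReal + 1 : ℝ≥0) * ∫⁻ ξ, w ξ * ‖𝓕 u ξ‖ₑ ^ 2 := by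
      gcongr
      simp [ENNReal.coe_toNNReal hK]

end Fourier

open FourierTransform SchwartzMap in
/-- Multiplication by a Schwartz function `χ` is bounded on the refined space
`H^{s,φ}(ℝⁿ)`: on the Fourier side, the weighted `L²` norm of `𝓕(χ·u)` is controlled by
that of `𝓕 u`, uniformly over Schwartz functions `u`. -/
theorem schwartz_multiplier_bounded_on_refined_scale
    (φ : ℝ → ℝ) (hφ : SlowlyVaryingM φ) (s : ℝ) (n : ℕ) (hn : 1 ≤ n)
    (χ : SchwartzMap (EuclideanSpace ℝ (Fin n)) ℂ) :
    ∃ C : ℝ, 0 < C ∧ ∀ u : SchwartzMap (EuclideanSpace ℝ (Fin n)) ℂ,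
      (∫⁻ ξ, ENNReal.ofReal (jbracket ξ ^ (2 * s) * φ (jbracket ξ) ^ 2 *
          ‖𝓕 (fun x => χ x * u x) ξ‖ ^ 2))
        ≤ ENNReal.ofReal C *
          ∫⁻ ξ, ENNReal.ofReal (jbracket ξ ^ (2 * s) * φ (jbracket ξ) ^ 2 *
            ‖𝓕 (fun x => u x) ξ‖ ^ 2) := by
  obtain ⟨C, hC, hle⟩ := schwartz_multiplier_bounded_on_refined_scale_general
    (ContinuousLinearMap.mul ℂ ℂ) (hφ.isModerateWeight (2 * s) n) χ
  refine ⟨C, hC, fun u ↦ ?_⟩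
  simpa only [ENNReal.ofReal_mul' (sq_nonneg _), ENNReal.ofReal_pow (norm_nonneg _), ofReal_norm,
    ENNReal.ofReal_coe_nnreal, ContinuousLinearMap.mul_apply'] using hle u
end
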